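/- Let F(X) = Σ_{n≥0} |{π ∈ S_n : π avoids the patterns 132, 2341 and 3241}|·Xⁿ ∈ ℚ⟦X⟧. Then (1 − 2X − X²)·F(X) = 1 − X − X². -/

import Mathlib

/-- A pattern is a permutation of `{1,…,k}` for some `k`. -/
def Pattern : Type := Σ k : ℕ, Equiv.Perm (Fin k)

/-- `IsOccurrence τ π f` says that the strictly increasing tuple of indices `f` is an
occurrence of the pattern `τ` in the permutation `π`, i.e. `π ∘ f` is order-isomorphic
to `τ`. -/
def IsOccurrence {k n : ℕ} (τ : Equiv.Perm (Fin k)) (π : Equiv.Perm (Fin n))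
    (f : Fin k → Fin n) : Prop :=
  StrictMono f ∧ ∀ a b : Fin k, τ a < τ b ↔ π (f a) < π (f b)

/-- `π` contains the pattern `τ` (at least once). -/
def Contains {k n : ℕ} (τ : Equiv.Perm (Fin k)) (π : Equiv.Perm (Fin n)) : Prop :=
  ∃ f : Fin k → Fin n, IsOccurrence τ π f

/-- `π` contains the pattern `τ` exactly once. -/
def ContainsOnce {k n : ℕ} (τ : Equiv.Perm (Fin k)) (π : Equiv.Perm (Fin n)) : Prop :=
  ∃! f : Fin k → Fin n, IsOccurrence τ π f

/-- `π` avoids every pattern in the set `T`. -/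
def AvoidsSet {n : ℕ} (T : Set Pattern) (π : Equiv.Perm (Fin n)) : Prop :=
  ∀ p ∈ T, ¬ Contains p.2 π

/-- `f_T(n)`: the number of permutations of `{1,…,n}` avoiding every pattern in `T`. -/
noncomputable def avoidCount (T : Set Pattern) (n : ℕ) : ℕ :=
  Nat.card {π : Equiv.Perm (Fin n) // AvoidsSet T π}

/-- The pattern `132 ∈ S₃` (zero-indexed: `0 ↦ 0, 1 ↦ 2, 2 ↦ 1`). -/
noncomputable def p132 : Equiv.Perm (Fin 3) := Equiv.ofBijective ![0, 2, 1] (by decide)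

/-- The pattern `2341 ∈ S₄` (zero-indexed: `0↦1, 1↦2, 2↦3, 3↦0`). -/
noncomputable def p2341 : Equiv.Perm (Fin 4) := Equiv.ofBijective ![1, 2, 3, 0] (by decide)

/-- The pattern `3241 ∈ S₄` (zero-indexed: `0↦2, 1↦1, 2↦3, 3↦0`). -/
noncomputable def p3241 : Equiv.Perm (Fin 4) := Equiv.ofBijective ![2, 1, 3, 0] (by decide)

/-- Elementwise form of avoiding the three patterns. -/
def Av {n : ℕ} (π : Equiv.Perm (Fin n)) : Prop :=
  (∀ i j k : Fin n, i < j → j < k → π i < π k → π k < π j → False) ∧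
  (∀ i j k l : Fin n, i < j → j < k → k < l → π l < π i → π l < π j → π i < π k → π j < π k →
    False)

set_option synthInstance.maxSize 5000 in
set_option synthInstance.maxHeartbeats 400000 in
instance {n : ℕ} : DecidablePred (@Av n) := fun π => by unfold Av; infer_instance

lemma contains132_iff {n : ℕ} (π : Equiv.Perm (Fin n)) :
    Contains p132 π ↔ ∃ i j k : Fin n, i < j ∧ j < k ∧ π i < π k ∧ π k < π j := by
  have h0 : p132 0 = 0 := rfl
  have h1 : p132 1 = 2 := rfl
  have h2 : p132 2 = 1 := rfl
  constructor
  · rintro ⟨f, hf, h⟩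
    refine ⟨f 0, f 1, f 2, hf (by decide), hf (by decide), (h 0 2).1 ?_, (h 2 1).1 ?_⟩
    · rw [h0, h2]; decide
    · rw [h1, h2]; decide
  · rintro ⟨i, j, k, hij, hjk, a, b⟩
    refine ⟨![i, j, k], ?_, ?_⟩
    · rw [Fin.strictMono_iff_lt_succ]
      intro x
      fin_cases x <;> simpa
    · intro x y
      fin_cases x <;> fin_cases y <;> simp [h0, h1, h2] <;> order

lemma contains2341_iff {n : ℕ} (π : Equiv.Perm (Fin n)) :
    Contains p2341 π ↔ ∃ i j k l : Fin n, i < j ∧ j < k ∧ k < l ∧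
      π l < π i ∧ π i < π j ∧ π j < π k := by
  have h0 : p2341 0 = 1 := rfl
  have h1 : p2341 1 = 2 := rfl
  have h2 : p2341 2 = 3 := rfl
  have h3 : p2341 3 = 0 := rfl
  constructor
  · rintro ⟨f, hf, h⟩
    refine ⟨f 0, f 1, f 2, f 3, hf (by decide), hf (by decide), hf (by decide),
      (h 3 0).1 ?_, (h 0 1).1 ?_, (h 1 2).1 ?_⟩
    · rw [h0, h3]; decide
    · rw [h0, h1]; decide
    · rw [h1, h2]; decide
  · rintro ⟨i, j, k, l, hij, hjk, hkl, a, b, c⟩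
    refine ⟨![i, j, k, l], ?_, ?_⟩
    · rw [Fin.strictMono_iff_lt_succ]
      intro x
      fin_cases x <;> simpa
    · intro x y
      fin_cases x <;> fin_cases y <;> simp [h0, h1, h2, h3] <;> order

lemma contains3241_iff {n : ℕ} (π : Equiv.Perm (Fin n)) :
    Contains p3241 π ↔ ∃ i j k l : Fin n, i < j ∧ j < k ∧ k < l ∧
      π l < π j ∧ π j < π i ∧ π i < π k := by
  have h0 : p3241 0 = 2 := rfl
  have h1 : p3241 1 = 1 := rfl
  have h2 : p3241 2 = 3 := rfl
  have h3 : p3241 3 = 0 := rfl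
  constructor
  · rintro ⟨f, hf, h⟩
    refine ⟨f 0, f 1, f 2, f 3, hf (by decide), hf (by decide), hf (by decide),
      (h 3 1).1 ?_, (h 1 0).1 ?_, (h 0 2).1 ?_⟩
    · rw [h1, h3]; decide
    · rw [h0, h1]; decide
    · rw [h0, h2]; decide
  · rintro ⟨i, j, k, l, hij, hjk, hkl, a, b, c⟩
    refine ⟨![i, j, k, l], ?_, ?_⟩
    · rw [Fin.strictMono_iff_lt_succ]
      intro x
      fin_cases x <;> simpa
    · intro x y
      fin_cases x <;> fin_cases y <;> simp [h0, h1, h2, h3] <;> order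

lemma av_iff {n : ℕ} (π : Equiv.Perm (Fin n)) :
    (¬ Contains p132 π ∧ ¬ Contains p2341 π ∧ ¬ Contains p3241 π) ↔ Av π := by
  rw [contains132_iff, contains2341_iff, contains3241_iff]
  constructor
  · rintro ⟨h1, h2, h3⟩
    refine ⟨fun i j k a b c d => h1 ⟨i, j, k, a, b, c, d⟩, ?_⟩
    intro i j k l a b c d e f g
    rcases lt_trichotomy (π i) (π j) with h | h | h
    · exact h2 ⟨i, j, k, l, a, b, c, d, h, g⟩
    · exact a.ne (π.injective h)
    · exact h3 ⟨i, j, k, l, a, b, c, e, h, f⟩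
  · rintro ⟨h1, h2⟩
    refine ⟨?_, ?_, ?_⟩
    · rintro ⟨i, j, k, a, b, c, d⟩
      exact h1 i j k a b c d
    · rintro ⟨i, j, k, l, a, b, c, d, e, f⟩
      exact h2 i j k l a b c d (d.trans e) (e.trans f) f
    · rintro ⟨i, j, k, l, a, b, c, d, e, f⟩
      exact h2 i j k l a b c (d.trans e) d f (e.trans f)

/-- Insert the maximum at position `p`. -/
def ins {n : ℕ} (p : Fin (n + 1)) (σ : Equiv.Perm (Fin n)) : Equiv.Perm (Fin (n + 1)) :=
  (finSuccEquiv' p).trans ((Equiv.optionCongr σ).trans (finSuccEquiv' (Fin.last n)).symm)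

lemma ins_self {n : ℕ} (p : Fin (n + 1)) (σ : Equiv.Perm (Fin n)) : ins p σ p = Fin.last n := by
  simp [ins]

lemma ins_succAbove {n : ℕ} (p : Fin (n + 1)) (σ : Equiv.Perm (Fin n)) (i : Fin n) :
    ins p σ (p.succAbove i) = (σ i).castSucc := by
  simp [ins]

lemma ins_inj {n : ℕ} (p : Fin (n + 1)) : Function.Injective (ins p) := by
  intro σ τ h
  ext i
  have := congrArg (fun e => e (p.succAbove i)) h
  simp only [ins_succAbove] at this
  exact congrArg Fin.val (Fin.castSucc_injective _ this)

lemma exists_ins {n : ℕ} (p : Fin (n + 1)) (π : Equiv.Perm (Fin (n + 1)))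
    (h : π p = Fin.last n) : ∃ σ, ins p σ = π := by
  have hne : ∀ i, π (p.succAbove i) ≠ Fin.last n := by
    intro i hi
    rw [← h] at hi
    exact Fin.succAbove_ne p i (π.injective hi)
  have hinj : Function.Injective (fun i => (π (p.succAbove i)).castPred (hne i)) := by
    intro i j hij
    exact Fin.succAbove_right_injective (π.injective (Fin.castPred_inj.1 hij))
  refine ⟨Equiv.ofBijective _ (Finite.injective_iff_bijective.1 hinj), ?_⟩
  refine Equiv.ext fun x => ?_
  rcases Fin.eq_self_or_eq_succAbove p x with rfl | ⟨i, rfl⟩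
  · rw [ins_self, h]
  · rw [ins_succAbove]; simp

lemma av_of_ins {n : ℕ} (p : Fin (n + 1)) (σ : Equiv.Perm (Fin n)) (h : Av (ins p σ)) : Av σ := by
  constructor
  · intro i j k a b c d
    apply h.1 (p.succAbove i) (p.succAbove j) (p.succAbove k) <;>
      simpa [ins_succAbove, Fin.succAbove_lt_succAbove_iff]
  · intro i j k l a b c d e f g
    apply h.2 (p.succAbove i) (p.succAbove j) (p.succAbove k) (p.succAbove l) <;>
      simpa [ins_succAbove, Fin.succAbove_lt_succAbove_iff]

lemma ins_zero_succ {n : ℕ} (σ : Equiv.Perm (Fin n)) (i : Fin n) :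
    ins 0 σ i.succ = (σ i).castSucc := by
  simpa using ins_succAbove 0 σ i

lemma ins_last_castSucc {n : ℕ} (σ : Equiv.Perm (Fin n)) (i : Fin n) :
    ins (Fin.last n) σ i.castSucc = (σ i).castSucc := by
  simpa using ins_succAbove (Fin.last n) σ i

lemma av_ins_zero {n : ℕ} (σ : Equiv.Perm (Fin n)) (h : Av σ) : Av (ins 0 σ) := by
  have key : ∀ i k, ins 0 σ i < ins 0 σ k → i ≠ 0 := by
    rintro i k hik rfl
    rw [ins_self] at hik
    exact absurd hik (Fin.le_last _).not_gt
  constructor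
  · intro i j k a b c d
    have hi := key i k c
    obtain ⟨i, rfl⟩ := Fin.exists_succ_eq.2 hi
    obtain ⟨j, rfl⟩ := Fin.exists_succ_eq.2 (a.trans_le' (Fin.zero_le _)).ne'
    obtain ⟨k, rfl⟩ := Fin.exists_succ_eq.2 (b.trans_le' (Fin.zero_le _)).ne'
    simp only [ins_zero_succ, Fin.castSucc_lt_castSucc_iff, Fin.succ_lt_succ_iff] at *
    exact h.1 i j k a b c d
  · intro i j k l a b c d e f g
    have hi := key i k f
    obtain ⟨i, rfl⟩ := Fin.exists_succ_eq.2 hi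
    obtain ⟨j, rfl⟩ := Fin.exists_succ_eq.2 (a.trans_le' (Fin.zero_le _)).ne'
    obtain ⟨k, rfl⟩ := Fin.exists_succ_eq.2 (b.trans_le' (Fin.zero_le _)).ne'
    obtain ⟨l, rfl⟩ := Fin.exists_succ_eq.2 (c.trans_le' (Fin.zero_le _)).ne'
    simp only [ins_zero_succ, Fin.castSucc_lt_castSucc_iff, Fin.succ_lt_succ_iff] at *
    exact h.2 i j k l a b c d e f g

lemma av_ins_last {n : ℕ} (σ : Equiv.Perm (Fin n)) (h : Av σ) : Av (ins (Fin.last n) σ) := by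
  have key : ∀ i k, ins (Fin.last n) σ i < ins (Fin.last n) σ k → i ≠ Fin.last n := by
    rintro i k hik rfl
    rw [ins_self] at hik
    exact absurd hik (Fin.le_last _).not_gt
  constructor
  · intro i j k a b c d
    obtain ⟨k, rfl⟩ := Fin.exists_castSucc_eq.2 (key k j d)
    obtain ⟨j, rfl⟩ := Fin.exists_castSucc_eq.2 (b.trans_le (Fin.le_last _)).ne
    obtain ⟨i, rfl⟩ := Fin.exists_castSucc_eq.2 (a.trans_le (Fin.le_last _)).ne
    simp only [ins_last_castSucc, Fin.castSucc_lt_castSucc_iff] at *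
    exact h.1 i j k a b c d
  · intro i j k l a b c d e f g
    obtain ⟨l, rfl⟩ := Fin.exists_castSucc_eq.2 (key l i d)
    obtain ⟨k, rfl⟩ := Fin.exists_castSucc_eq.2 (c.trans_le (Fin.le_last _)).ne
    obtain ⟨j, rfl⟩ := Fin.exists_castSucc_eq.2 (b.trans_le (Fin.le_last _)).ne
    obtain ⟨i, rfl⟩ := Fin.exists_castSucc_eq.2 (a.trans_le (Fin.le_last _)).ne
    simp only [ins_last_castSucc, Fin.castSucc_lt_castSucc_iff] at *
    exact h.2 i j k l a b c d e f g

/-- The permutation starting with second-largest, largest. -/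
def ins2 {n : ℕ} (σ : Equiv.Perm (Fin n)) : Equiv.Perm (Fin (n + 2)) := ins 1 (ins 0 σ)

lemma ins2_zero {n : ℕ} (σ : Equiv.Perm (Fin n)) : ins2 σ 0 = (Fin.last n).castSucc := by
  have := ins_succAbove 1 (ins 0 σ) 0
  rw [ins_self] at this
  simpa [ins2] using this

lemma ins2_one {n : ℕ} (σ : Equiv.Perm (Fin n)) : ins2 σ 1 = Fin.last (n + 1) := ins_self _ _

lemma ins2_succ {n : ℕ} (σ : Equiv.Perm (Fin n)) (i : Fin n) :
    ins2 σ i.succ.succ = (σ i).castSucc.castSucc := by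
  have := ins_succAbove 1 (ins 0 σ) i.succ
  rw [ins_zero_succ] at this
  simpa [ins2] using this

lemma fin_cases2 {n : ℕ} (i : Fin (n + 2)) : i = 0 ∨ i = 1 ∨ ∃ j : Fin n, i = j.succ.succ := by
  induction i using Fin.cases with
  | zero => simp
  | succ i =>
    induction i using Fin.cases with
    | zero => simp
    | succ i => exact Or.inr (Or.inr ⟨i, rfl⟩)

lemma av_ins2 {n : ℕ} (σ : Equiv.Perm (Fin n)) (h : Av σ) : Av (ins2 σ) := by
  have v0 : (ins2 σ 0).val = n := by rw [ins2_zero]; simp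
  have v1 : (ins2 σ 1).val = n + 1 := by rw [ins2_one]; simp
  have vs : ∀ i, (ins2 σ (Fin.succ (Fin.succ i))).val = (σ i).val := by
    intro i; rw [ins2_succ]; simp
  have key : ∀ i j k, i < j → j < k → ins2 σ i < ins2 σ k → ∃ i', i = Fin.succ (Fin.succ i') := by
    intro i j k hij hjk hik
    obtain ⟨k', rfl⟩ : ∃ k', k = Fin.succ (Fin.succ k') := by
      rcases fin_cases2 k with rfl | rfl | h
      · simp [Fin.lt_def] at hjk
      · rw [Fin.lt_def] at hij hjk; simp only [Fin.val_one] at hjk; omega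
      · exact h
    have := (σ k').2
    rcases fin_cases2 i with rfl | rfl | h
    · rw [Fin.lt_def, v0, vs] at hik; omega
    · rw [Fin.lt_def, v1, vs] at hik; omega
    · exact h
  have up : ∀ (i : Fin n) j, i.succ.succ < j → ∃ j', j = Fin.succ (Fin.succ j') := by
    intro i j hij
    rcases fin_cases2 j with rfl | rfl | h
    · simp [Fin.lt_def] at hij
    · simp [Fin.lt_def] at hij
    · exact h
  constructor
  · intro i j k a b c d
    obtain ⟨i, rfl⟩ := key i j k a b c
    obtain ⟨j, rfl⟩ := up _ _ a
    obtain ⟨k, rfl⟩ := up _ _ b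
    simp only [ins2_succ, Fin.castSucc_lt_castSucc_iff, Fin.succ_lt_succ_iff] at a b c d
    exact h.1 i j k a b c d
  · intro i j k l a b c d e f g
    obtain ⟨i, rfl⟩ := key i j k a b f
    obtain ⟨j, rfl⟩ := up _ _ a
    obtain ⟨k, rfl⟩ := up _ _ b
    obtain ⟨l, rfl⟩ := up _ _ c
    simp only [ins2_succ, Fin.castSucc_lt_castSucc_iff, Fin.succ_lt_succ_iff] at a b c d e f g
    exact h.2 i j k l a b c d e f g

lemma av_lt {n : ℕ} (π : Equiv.Perm (Fin (n + 1))) (h : Av π) (i p k : Fin (n + 1))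
    (hp : π p = Fin.last n) (hi : i < p) (hk : p < k) : π k < π i := by
  have h1 : π k < π p := by
    rw [hp]
    refine lt_of_le_of_ne (Fin.le_last _) fun e => ?_
    rw [← hp] at e
    exact hk.ne' (π.injective e)
  rcases lt_trichotomy (π k) (π i) with h2 | h2 | h2
  · exact h2
  · exact absurd (π.injective h2) (hi.trans hk).ne'
  · exact (h.1 i p k hi hk h2 h1).elim

lemma av_cases {n : ℕ} (π : Equiv.Perm (Fin (n + 3))) :
    Av π ↔ (∃ σ, Av σ ∧ ins 0 σ = π) ∨ (∃ σ, Av σ ∧ ins (Fin.last _) σ = π) ∨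
      (∃ σ, Av σ ∧ ins2 σ = π) := by
  constructor
  · intro h
    obtain ⟨p, hp⟩ := π.surjective (Fin.last _)
    by_cases p0 : p = 0
    · subst p0
      obtain ⟨σ, rfl⟩ := exists_ins _ _ hp
      exact Or.inl ⟨σ, av_of_ins _ _ h, rfl⟩
    by_cases pl : p = Fin.last _
    · subst pl
      obtain ⟨σ, rfl⟩ := exists_ins _ _ hp
      exact Or.inr (Or.inl ⟨σ, av_of_ins _ _ h, rfl⟩)
    by_cases p1 : p = 1
    · subst p1
      obtain ⟨σ, rfl⟩ := exists_ins _ _ hp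
      have hs : Av σ := av_of_ins _ _ h
      have h0 : σ 0 = Fin.last _ := by
        obtain ⟨q, hq⟩ := σ.surjective (Fin.last _)
        by_cases hq0 : q = 0
        · rw [← hq, hq0]
        · obtain ⟨q, rfl⟩ := Fin.exists_succ_eq.2 hq0
          have := av_lt _ h ((1 : Fin (n + 3)).succAbove 0) 1
            ((1 : Fin (n + 3)).succAbove q.succ) hp (by simp) (by simp [Fin.lt_def])
          rw [ins_succAbove, ins_succAbove, hq, Fin.castSucc_lt_castSucc_iff] at this
          exact absurd this (Fin.le_last _).not_gt
      obtain ⟨τ, rfl⟩ := exists_ins _ _ h0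
      exact Or.inr (Or.inr ⟨τ, av_of_ins _ _ hs, rfl⟩)
    · exfalso
      have p0' : p.val ≠ 0 := fun e => p0 (Fin.ext e)
      have p1' : p.val ≠ 1 := fun e => p1 (Fin.ext (by simpa using e))
      have pl' : p.val ≠ n + 2 := fun e => pl (Fin.ext e)
      have hlt := p.2
      have a0 : (0 : Fin (n + 3)) < p := Fin.pos_iff_ne_zero.2 p0
      have a1 : (1 : Fin (n + 3)) < p := by rw [Fin.lt_def, Fin.val_one]; omega
      have al : p < Fin.last (n + 2) := by rw [Fin.lt_def, Fin.val_last]; omega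
      have b : ∀ i, i < p → π i < π p := by
        intro i hi
        rw [hp]
        refine lt_of_le_of_ne (Fin.le_last _) fun e => ?_
        rw [← hp] at e
        exact hi.ne (π.injective e)
      exact h.2 0 1 p (Fin.last _) (by simp [Fin.lt_def]) a1 al
        (av_lt π h _ _ _ hp a0 al) (av_lt π h _ _ _ hp a1 al) (b _ a0) (b _ a1)
  · rintro (⟨σ, h, rfl⟩ | ⟨σ, h, rfl⟩ | ⟨σ, h, rfl⟩)
    · exact av_ins_zero _ h
    · exact av_ins_last _ h
    · exact av_ins2 _ h

/-- The finite set of avoiders. -/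
def AvSet (n : ℕ) : Finset (Equiv.Perm (Fin n)) := Finset.univ.filter Av

lemma card_rec (n : ℕ) :
    (AvSet (n + 3)).card = 2 * (AvSet (n + 2)).card + (AvSet (n + 1)).card := by
  have e : AvSet (n + 3) = (AvSet (n + 2)).image (ins 0) ∪
      ((AvSet (n + 2)).image (ins (Fin.last _)) ∪ (AvSet (n + 1)).image ins2) := by
    ext π
    simp only [AvSet, Finset.mem_union, Finset.mem_image, Finset.mem_filter, Finset.mem_univ,
      true_and]
    exact av_cases π
  have hne : ∀ (π : Equiv.Perm (Fin (n + 3))) p q, p ≠ q → π p = Fin.last _ →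
      π q = Fin.last _ → False := fun π p q h a b => h (π.injective (a.trans b.symm))
  rw [e, Finset.card_union_of_disjoint, Finset.card_union_of_disjoint,
    Finset.card_image_of_injective _ (ins_inj _), Finset.card_image_of_injective _ (ins_inj _),
    Finset.card_image_of_injective _ (f := ins2) ((ins_inj _).comp (ins_inj _))]
  · ring
  · rw [Finset.disjoint_left]
    simp only [Finset.mem_image]
    rintro π ⟨σ, -, rfl⟩ ⟨τ, -, h⟩
    exact hne _ (Fin.last _) 1 (by simp [Fin.ext_iff]) (ins_self _ _) (h ▸ ins2_one τ)
  · rw [Finset.disjoint_left]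
    simp only [Finset.mem_image, Finset.mem_union]
    rintro π ⟨σ, -, rfl⟩ (⟨τ, -, h⟩ | ⟨τ, -, h⟩)
    · exact hne _ 0 (Fin.last _) (by simp [Fin.ext_iff]) (ins_self _ _) (h ▸ ins_self _ τ)
    · exact hne _ 0 1 (by simp [Fin.ext_iff]) (ins_self _ _) (h ▸ ins2_one τ)

lemma card_eq (n : ℕ) : Nat.card {π : Equiv.Perm (Fin n) //
    ¬ Contains p132 π ∧ ¬ Contains p2341 π ∧ ¬ Contains p3241 π} = (AvSet n).card := by
  simp only [av_iff]
  rw [Nat.card_eq_fintype_card, Fintype.card_subtype, AvSet]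

/-- The generating function `F` for permutations avoiding `132`, `2341`
and `3241` satisfies `(1 − 2X − X²)·F = 1 − X − X²`. -/
theorem stmt10 :
    ((1 : PowerSeries ℚ) - 2 * PowerSeries.X - PowerSeries.X ^ 2)
      * (PowerSeries.mk fun n => ((Nat.card {π : Equiv.Perm (Fin n) //
          ¬ Contains p132 π ∧ ¬ Contains p2341 π ∧ ¬ Contains p3241 π} : ℕ) : ℚ))
      = 1 - PowerSeries.X - PowerSeries.X ^ 2 := by
  simp only [card_eq]
  have c0 : (AvSet 0).card = 1 := by decide
  have c1 : (AvSet 1).card = 1 := by decide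
  have c2 : (AvSet 2).card = 2 := by decide
  have e : ∀ F : PowerSeries ℚ, ((1 : PowerSeries ℚ) - 2 * PowerSeries.X - PowerSeries.X ^ 2) * F
      = F - (F * PowerSeries.X + F * PowerSeries.X) - F * PowerSeries.X * PowerSeries.X := by
    intro F; ring
  rw [e, pow_two]
  ext n
  rcases n with _ | _ | _ | n
  · simp [c0]
  · simp [PowerSeries.coeff_succ_mul_X, PowerSeries.coeff_one, PowerSeries.coeff_X, c0, c1]
  · simp [PowerSeries.coeff_succ_mul_X, PowerSeries.coeff_one, PowerSeries.coeff_X, c0, c1, c2]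
    norm_num
  · simp [PowerSeries.coeff_succ_mul_X, PowerSeries.coeff_one, PowerSeries.coeff_X, card_rec]
    ring
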